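/- For every N ≥ 1, the symmetric Krawtchouk matrices satisfy the recursion S^(N+1) = r( S^(N) ⊗ H ), where H = [[1,1],[1,−1]], ⊗ is the Kronecker product (so S^(N) ⊗ H is the (2N+2)×(2N+2) matrix with entries (S^(N) ⊗ H)_{2i+s, 2j+t} = S^(N)_{ij}·H_{st} for 0 ≤ i,j ≤ N and s,t ∈ {0,1}), and r is the square contraction. -/

import Mathlib

/-!
The column `j` of `K^(N)` is the coefficient sequence of `(1 - X)^j (1 + X)^(N - j)`. Multiplying
this polynomial by `1 + X` or by `1 - X` gives the column `j` or `j + 1` of `K^(N+1)`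
(`kraw_succ_left` and `kraw_succ_succ`). In the column `j` of `r (S^(N) ⊗ H)`, the blocks coming
from the columns `j` and `j - 1` of `S^(N)` are therefore `C(N, j)` and `C(N, j - 1)` times the
column `j` of `K^(N+1)`, and Pascal's rule adds the two factors up to `C(N + 1, j)`.
On the border of the matrix the missing entries are consistent with this, since
`K^(N)_{N+1, j} = 0` for degree reasons (`kraw_top`) and `C(N, N + 1) = 0`.
-/

/-- The `(i,j)` entry of the `N`-th Krawtchouk matrix:
`K^(N)_{ij} = ∑_k (−1)^k C(j,k) C(N−j, i−k)`. -/
def kraw (N i j : ℕ) : ℤ :=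
  ∑ k ∈ Finset.range (i + 1), (-1 : ℤ) ^ k * (j.choose k) * ((N - j).choose (i - k))

/-- Entry of the symmetric Krawtchouk matrix `S^(N) = K^(N) B^(N)`,
where `B^(N)` is the diagonal matrix of binomial coefficients. -/
def skraw (N i j : ℕ) : ℤ := kraw N i j * (N.choose j)

/-- Entry of a `2n × 2n` matrix `M` (given by its entries on `0,…,2n−1`) at an
integer position, taken to be `0` outside the range `{0,…,2n−1}`. -/
def mget (n : ℕ) (M : ℕ → ℕ → ℤ) (a b : ℤ) : ℤ :=
  if 0 ≤ a ∧ a < 2 * n ∧ 0 ≤ b ∧ b < 2 * n then M a.toNat b.toNat else 0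

/-- The square contraction of a `2n × 2n` matrix `M`:
`(rM)_{ij} = ∑_{a ∈ {2i−1, 2i}} ∑_{b ∈ {2j−1, 2j}} M_{ab}` for `0 ≤ i,j ≤ n`,
where out-of-range entries of `M` count as zero. -/
def contraction (n : ℕ) (M : ℕ → ℕ → ℤ) (i j : ℕ) : ℤ :=
  mget n M (2 * i - 1) (2 * j - 1) + mget n M (2 * i - 1) (2 * j)
    + mget n M (2 * i) (2 * j - 1) + mget n M (2 * i) (2 * j)

/-- Entries of the fundamental Hadamard matrix `H = [[1,1],[1,−1]]` on indices `{0,1}`. -/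
def Hent (s t : ℕ) : ℤ := if s = 1 ∧ t = 1 then -1 else 1

/-- Kronecker product with `H`: `(A ⊗ H)_{2i+s, 2j+t} = A_{ij} H_{st}` for `s,t ∈ {0,1}`. -/
def kronH (A : ℕ → ℕ → ℤ) (a b : ℕ) : ℤ := A (a / 2) (b / 2) * Hent (a % 2) (b % 2)

open Polynomial in
theorem coeff_one_sub_X_pow_int (j k : ℕ) :
    ((1 - X : ℤ[X]) ^ j).coeff k = (-1) ^ k * (j.choose k : ℤ) := by
  have h : (1 - X : ℤ[X]) ^ j = ((1 + X : ℤ[X]) ^ j).comp (C (-1) * X) := by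
    simp [sub_eq_add_neg]
  rw [h, comp_C_mul_X_coeff, coeff_one_add_X_pow, mul_comm]

open Polynomial in
/-- The generating polynomial of a column of the Krawtchouk matrix. -/
theorem kraw_eq_coeff (N i j : ℕ) :
    kraw N i j = ((1 - X : ℤ[X]) ^ j * (1 + X) ^ (N - j)).coeff i := by
  rw [coeff_mul, Finset.Nat.sum_antidiagonal_eq_sum_range_succ_mk, kraw]
  refine Finset.sum_congr rfl fun k _ => ?_
  rw [coeff_one_sub_X_pow_int, coeff_one_add_X_pow]

theorem kraw_zero (N j : ℕ) : kraw N 0 j = 1 := by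
  simp [kraw]

/-- Multiplication of the generating polynomial by `1 + X`. -/
theorem kraw_succ_left {N j : ℕ} (i : ℕ) (hj : j ≤ N) :
    kraw (N + 1) (i + 1) j = kraw N (i + 1) j + kraw N i j := by
  simp only [kraw_eq_coeff]
  rw [Nat.succ_sub hj, pow_succ, ← mul_assoc, mul_add, mul_one, Polynomial.coeff_add,
    Polynomial.coeff_mul_X]

/-- Multiplication of the generating polynomial by `1 - X`. -/
theorem kraw_succ_succ (N i j : ℕ) :
    kraw (N + 1) (i + 1) (j + 1) = kraw N (i + 1) j - kraw N i j := by
  simp only [kraw_eq_coeff]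
  rw [Nat.add_sub_add_right, pow_succ, mul_right_comm, mul_sub, mul_one, Polynomial.coeff_sub,
    Polynomial.coeff_mul_X]

/-- The generating polynomial of a column of `K^(N)` has degree at most `N`. -/
theorem kraw_top {N j : ℕ} (hj : j ≤ N) : kraw N (N + 1) j = 0 := by
  refine Finset.sum_eq_zero fun k _ => ?_
  rcases lt_or_ge j k with h | h
  · simp [Nat.choose_eq_zero_of_lt h]
  · rw [Nat.choose_eq_zero_of_lt (show N - j < N + 1 - k by omega)]
    simp

theorem skraw_top (N j : ℕ) : skraw N (N + 1) j = 0 := by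
  rcases lt_or_ge N j with h | h
  · simp [skraw, Nat.choose_eq_zero_of_lt h]
  · simp [skraw, kraw_top h]

/-- Inside the range `i, j ≤ N + 1` the entries of `S^(N) ⊗ H` need no cut-off above: where
`i` or `j` equals `N + 1`, the formula for `S^(N)` already gives zero. -/
theorem mget_kronH (N i j s t : ℕ) (hi : i ≤ N + 1) (hj : j ≤ N + 1) (hs : s < 2) (ht : t < 2)
    (a b : ℤ) (ha : a = 2 * i + s) (hb : b = 2 * j + t) :
    mget (N + 1) (kronH (skraw N)) a b = skraw N i j * Hent s t := by
  have ha' : a.toNat = 2 * i + s := by omega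
  have hb' : b.toNat = 2 * j + t := by omega
  have e1 : (2 * i + s) / 2 = i := by omega
  have e2 : (2 * j + t) / 2 = j := by omega
  have e3 : (2 * i + s) % 2 = s := by omega
  have e4 : (2 * j + t) % 2 = t := by omega
  unfold mget
  split_ifs with h
  · rw [kronH, ha', hb', e1, e2, e3, e4]
  · have h' : i = N + 1 ∨ j = N + 1 := by
      push_cast at h
      omega
    rcases h' with rfl | rfl
    · simp [skraw_top]
    · simp [skraw]

theorem mget_of_neg_left (n : ℕ) (M : ℕ → ℕ → ℤ) {a : ℤ} (b : ℤ) (ha : a < 0) :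
    mget n M a b = 0 :=
  if_neg fun h => by omega

theorem mget_of_neg_right (n : ℕ) (M : ℕ → ℕ → ℤ) (a : ℤ) {b : ℤ} (hb : b < 0) :
    mget n M a b = 0 :=
  if_neg fun h => by omega

/-- The identity `kraw_succ_left` weighted by `C(N, j)`: it then holds for every `j`, as all terms
vanish for `j > N`. -/
theorem kraw_succ_left_mul_choose (N i j : ℕ) :
    kraw (N + 1) (i + 1) j * (N.choose j) = skraw N (i + 1) j + skraw N i j := by
  rcases lt_or_ge N j with h | h
  · simp [skraw, Nat.choose_eq_zero_of_lt h]
  · rw [kraw_succ_left i h, skraw, skraw, add_mul]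

/-- The symmetric Krawtchouk matrices satisfy `S^(N+1) = r(S^(N) ⊗ H)`:
here `S^(N) ⊗ H` is `(2N+2)×(2N+2)` and `r` is the square contraction with `n = N+1`. -/
theorem symmetric_krawtchouk_recursion (N : ℕ) (hN : 1 ≤ N)
    (i j : ℕ) (hi : i ≤ N + 1) (hj : j ≤ N + 1) :
    skraw (N + 1) i j = contraction (N + 1) (kronH (skraw N)) i j := by
  unfold contraction
  rcases i with _ | i <;> rcases j with _ | j
  · rw [mget_of_neg_left _ _ _ (by simp), mget_of_neg_left _ _ _ (by simp),
      mget_of_neg_right _ _ _ (by simp),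
      mget_kronH N 0 0 0 0 hi hj (by simp) (by simp) _ _ (by simp) (by simp)]
    simp [skraw, kraw_zero, Hent]
  · rw [mget_of_neg_left _ _ _ (by simp), mget_of_neg_left _ _ _ (by simp),
      mget_kronH N 0 j 0 1 hi (by omega) (by simp) (by simp) _ _ (by simp) (by push_cast; ring),
      mget_kronH N 0 (j + 1) 0 0 hi hj (by simp) (by simp) _ _ (by simp) (by simp)]
    simp [skraw, kraw_zero, Hent, Nat.choose_succ_succ]
  · rw [mget_of_neg_right _ _ _ (by simp),
      mget_kronH N i 0 1 0 (by omega) hj (by simp) (by simp) _ _ (by push_cast; ring) (by simp),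
      mget_of_neg_right _ _ _ (by simp),
      mget_kronH N (i + 1) 0 0 0 hi hj (by simp) (by simp) _ _ (by simp) (by simp)]
    simp [skraw, kraw_succ_left, Hent, add_comm]
  · rw [mget_kronH N i j 1 1 (by omega) (by omega) (by simp) (by simp) _ _
        (by push_cast; ring) (by push_cast; ring),
      mget_kronH N i (j + 1) 1 0 (by omega) hj (by simp) (by simp) _ _
        (by push_cast; ring) (by simp),
      mget_kronH N (i + 1) j 0 1 hi (by omega) (by simp) (by simp) _ _
        (by simp) (by push_cast; ring),
      mget_kronH N (i + 1) (j + 1) 0 0 hi hj (by simp) (by simp) _ _ (by simp) (by simp)]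
    have h1 := kraw_succ_left_mul_choose N i (j + 1)
    have h2 := kraw_succ_succ N i j
    simp only [skraw, Hent, Nat.choose_succ_succ] at h1 ⊢
    push_cast
    norm_num
    linear_combination h1 + (N.choose j : ℤ) * h2
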